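/- Let f, g ∈ 𝒦, α < 0 and β < 0 with α + 2β ≥ -1. Then ∫_{θ₁}^{θ₂} Re(1 + z C_{α,β}[f,g]''(z)/C_{α,β}[f,g]'(z)) dθ > (α + 2β)π ≥ -π for all 0 < r < 1 and 0 ≤ θ₁ < θ₂ ≤ 2π; hence C_{α,β}[f,g] is close-to-convex. -/

import Mathlib

open Complex Metric Real

/-- The class 𝔉: analytic on the unit disk, `f 0 = 0`, `f' 0 = 1`, `f'` nonvanishing. -/
def Fclass (f : ℂ → ℂ) : Prop :=
  DifferentiableOn ℂ f (ball 0 1) ∧ f 0 = 0 ∧ deriv f 0 = 1 ∧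
    ∀ z ∈ ball (0:ℂ) 1, deriv f z ≠ 0

/-- Normalized convex functions: `Re (1 + z f''/f') > 0` on the unit disk. -/
def Kclass (f : ℂ → ℂ) : Prop :=
  Fclass f ∧ ∀ z ∈ ball (0:ℂ) 1, 0 < (1 + z * deriv (deriv f) z / deriv f z).re

/-- **Jack's lemma**. -/
theorem exists_one_le_mul_deriv_eq {w : ℂ → ℂ} (hw : DifferentiableOn ℂ w (ball 0 1))
    (hw0 : w 0 = 0) {z₀ : ℂ} (hz₀ : z₀ ∈ ball (0 : ℂ) 1) (h1 : ‖w z₀‖ = 1)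
    (hle : ∀ z, ‖z‖ ≤ ‖z₀‖ → ‖w z‖ ≤ 1) :
    ∃ k : ℝ, 1 ≤ k ∧ z₀ * deriv w z₀ = k * w z₀ := by
  have hw1 : w z₀ ≠ 0 := norm_ne_zero_iff.1 (by rw [h1]; norm_num)
  rw [mem_ball_zero_iff] at hz₀
  set F : ℂ → ℂ := fun ζ => w (z₀ * ζ) / w z₀ with hF
  have hFle : ∀ ζ, ‖ζ‖ ≤ 1 → ‖F ζ‖ ≤ 1 := fun ζ hζ => by
    rw [hF, norm_div, h1, div_one]
    apply hle
    rw [norm_mul]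
    exact mul_le_of_le_one_right (norm_nonneg _) hζ
  have hF1 : F 1 = 1 := by simp [hF, hw1]
  have hFd : DifferentiableOn ℂ F (ball 0 1) := by
    refine (hw.comp (t := ball 0 1) (by fun_prop) fun ζ hζ => ?_).div_const _
    rw [mem_ball_zero_iff] at hζ ⊢
    rw [norm_mul]
    nlinarith [norm_nonneg z₀, norm_nonneg ζ]
  have hschwarz : ∀ ζ, ‖ζ‖ < 1 → ‖F ζ‖ ≤ ‖ζ‖ := fun ζ hζ =>
    norm_le_norm_of_mapsTo_ball hFd
      (fun x hx => by
        rw [mem_closedBall_zero_iff]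
        exact hFle x (mem_ball_zero_iff.1 hx).le)
      (by simp [hF, hw0]) hζ
  set d : ℂ := deriv w z₀ * z₀ / w z₀ with hd
  have hFderiv : HasDerivAt F d 1 := by
    have hwd : HasDerivAt w (deriv w z₀) (z₀ * 1) := by
      rw [mul_one]
      exact (hw.differentiableAt (isOpen_ball.mem_nhds (mem_ball_zero_iff.2 hz₀))).hasDerivAt
    exact (hwd.comp 1 (by simpa using (hasDerivAt_id (1 : ℂ)).const_mul z₀)).div_const _
  have hre : 1 ≤ d.re := by
    have h : HasDerivAt (fun t : ℝ => (F t).re) d.re 1 :=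
      HasDerivAt.real_of_complex (z := 1) (by simpa using hFderiv)
    have ht := (hasDerivWithinAt_iff_tendsto_slope' (s := Set.Iio 1) (by simp)).1
      h.hasDerivWithinAt
    refine ge_of_tendsto ht ?_
    filter_upwards [Ioo_mem_nhdsLT (zero_lt_one' ℝ)] with t ht
    have hb : (F t).re ≤ t := (re_le_norm _).trans <| by
      simpa [abs_of_pos ht.1] using hschwarz t (by simpa [abs_of_pos ht.1] using ht.2)
    rw [slope_def_field, ofReal_one, hF1, one_re, one_le_div_of_neg (by linarith [ht.2])]
    linarith
  have him : d.im = 0 := by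
    have hexp : HasDerivAt (fun x : ℂ => exp (x * I)) I ((0 : ℝ) : ℂ) := by
      simpa using ((hasDerivAt_id (((0 : ℝ) : ℂ))).mul_const I).cexp
    have h := (HasDerivAt.comp (h₂ := F) (h := fun x : ℂ => exp (x * I)) ((0 : ℝ) : ℂ)
      (by simpa using hFderiv) hexp).real_of_complex
    have hmax : IsLocalMax (fun x : ℝ => ((F ∘ fun x : ℂ => exp (x * I)) x).re) 0 := by
      refine Filter.Eventually.of_forall fun x => ?_
      simp only [Function.comp, ofReal_zero, zero_mul, Complex.exp_zero, hF1, one_re]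
      exact (re_le_norm _).trans (hFle _ (norm_exp_ofReal_mul_I x).le)
    simpa using hmax.hasDerivAt_eq_zero h
  refine ⟨d.re, hre, ?_⟩
  rw [show (d.re : ℂ) = d from Complex.ext rfl (by simp [him]), hd]
  field_simp

theorem norm_lt_one_of_jack {w : ℂ → ℂ} (hw : DifferentiableOn ℂ w (ball 0 1)) (hw0 : w 0 = 0)
    (H : ∀ z ∈ ball (0 : ℂ) 1, ‖w z‖ = 1 → ∀ k : ℝ, 1 ≤ k → z * deriv w z ≠ k * w z) :
    ∀ z ∈ ball (0 : ℂ) 1, ‖w z‖ < 1 := by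
  by_contra! hcon
  obtain ⟨z₁, hz₁, h1⟩ := hcon
  rw [mem_ball_zero_iff] at hz₁
  have hsub : closedBall (0 : ℂ) ‖z₁‖ ⊆ ball 0 1 := closedBall_subset_ball hz₁
  have hK : IsCompact (closedBall (0 : ℂ) ‖z₁‖ ∩ (fun z => ‖w z‖) ⁻¹' Set.Ici 1) :=
    (isCompact_closedBall _ _).of_isClosed_subset
      ((hw.continuousOn.norm.mono hsub).preimage_isClosed_of_isClosed isClosed_closedBall
        isClosed_Ici) Set.inter_subset_left
  obtain ⟨z₀, ⟨hz₀, hz₀'⟩, hmin⟩ := hK.exists_isMinOn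
    ⟨z₁, by simp, h1⟩ (continuous_norm.continuousOn (s := _))
  have hlt : ∀ z ∈ ball (0 : ℂ) ‖z₀‖, ‖w z‖ ≤ 1 := fun z hz => by
    by_contra! hgt
    rw [mem_ball_zero_iff] at hz
    exact hz.not_ge (hmin ⟨by simpa using hz.le.trans (by simpa using hz₀), hgt.le⟩)
  have hne : ‖z₀‖ ≠ 0 := fun h => by
    rw [norm_eq_zero] at h
    simp only [h, Set.mem_preimage, hw0, norm_zero, Set.mem_Ici] at hz₀'
    linarith
  have hle : ∀ z, ‖z‖ ≤ ‖z₀‖ → ‖w z‖ ≤ 1 := fun z hz => by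
    have hcl : closure (ball (0 : ℂ) ‖z₀‖) = closedBall 0 ‖z₀‖ := closure_ball _ hne
    refine le_on_closure (f := fun z => ‖w z‖) (g := fun _ => 1) hlt ?_ continuousOn_const
      (by rw [hcl]; simpa using hz)
    rw [hcl]
    exact (hw.continuousOn.mono ((closedBall_subset_closedBall (by simpa using hz₀)).trans
      hsub)).norm
  have heq : ‖w z₀‖ = 1 := le_antisymm (hle z₀ le_rfl) hz₀'
  obtain ⟨k, hk, hk'⟩ := exists_one_le_mul_deriv_eq hw hw0 (hsub hz₀) heq hle
  exact H z₀ (hsub hz₀) heq k hk hk'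

theorem re_eq_neg_half_of_mul_one_sub_eq {Q w : ℂ} {m : ℝ} (hw : ‖w‖ = 1) (hm : m ≠ 0)
    (h : Q * (1 - w) = m * w) : Q.re = -m / 2 := by
  have hsq : w.re * w.re + w.im * w.im = 1 := by
    rw [← normSq_apply, normSq_eq_norm_sq, hw, one_pow]
  have h1 := congrArg re h
  have h2 := congrArg im h
  simp only [mul_re, mul_im, sub_re, sub_im, one_re, one_im, ofReal_re, ofReal_im] at h1 h2
  have hne : w.re ≠ 1 := fun h => by
    have him : w.im = 0 := by
      rw [h] at hsq
      exact mul_self_eq_zero.1 (by linarith)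
    rw [h, him] at h1
    exact hm (by linarith)
  refine mul_right_cancel₀ (sub_ne_zero.2 hne.symm) ?_
  linear_combination ((1 - w.re) * h1 - w.im * h2 - (Q.re + m) * hsq) / 2

/-- A Briot–Bouquet type differential subordination. -/
theorem norm_lt_one_of_mul_one_sub_eq {w Q : ℂ → ℂ} (hw : DifferentiableOn ℂ w (ball 0 1))
    (hw0 : w 0 = 0) {a b : ℝ} (ha : 0 < a) (hb : 0 ≤ b)
    (hQ : ∀ z ∈ ball (0 : ℂ) 1, Q z * (1 - w z) = a * (z * deriv w z) + b * w z)
    (hre : ∀ z ∈ ball (0 : ℂ) 1, -(a + b) / 2 < (Q z).re) :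
    ∀ z ∈ ball (0 : ℂ) 1, ‖w z‖ < 1 := by
  refine norm_lt_one_of_jack hw hw0 fun z hz h1 k hk hk' => ?_
  have hak : a ≤ a * k := le_mul_of_one_le_right ha.le hk
  have h := re_eq_neg_half_of_mul_one_sub_eq (Q := Q z) (m := a * k + b) h1 (by linarith) (by
    rw [hQ z hz, hk']
    push_cast
    ring)
  linarith [hre z hz]

theorem half_lt_re_inv_one_sub {w : ℂ} (hw : ‖w‖ < 1) : 1 / 2 < ((1 - w)⁻¹).re := by
  have hsq : w.re * w.re + w.im * w.im < 1 := by
    rw [← normSq_apply, normSq_eq_norm_sq]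
    exact pow_lt_one₀ (norm_nonneg w) hw two_ne_zero
  have hpos : 0 < normSq (1 - w) := by
    rw [normSq_pos, sub_ne_zero]
    rintro rfl
    simp at hw
  rw [inv_re, div_lt_div_iff₀ two_pos hpos, normSq_apply]
  simp only [sub_re, sub_im, one_re, one_im]
  nlinarith

theorem intervalIntegral_re_le {p : ℂ → ℂ} (hp : DifferentiableOn ℂ p (ball 0 1)) {c : ℝ}
    (hc : ∀ z ∈ ball (0 : ℂ) 1, c ≤ (p z).re) {r : ℝ} (hr0 : 0 < r) (hr1 : r < 1)
    {θ₁ θ₂ : ℝ} (h1 : 0 ≤ θ₁) (h2 : θ₂ ≤ 2 * π) :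
    ∫ θ in θ₁..θ₂, (p (r * exp (θ * I))).re ≤
      2 * π * (p 0).re - c * (2 * π - (θ₂ - θ₁)) := by
  have hmem : ∀ θ : ℝ, (r : ℂ) * exp (θ * I) ∈ ball (0 : ℂ) 1 := fun θ => by
    simp [abs_of_pos hr0, hr1, norm_exp_ofReal_mul_I]
  have hcont : Continuous fun θ : ℝ => p (r * exp (θ * I)) :=
    hp.continuousOn.comp_continuous (by fun_prop) hmem
  have hint : ∀ a b, IntervalIntegrable (fun θ : ℝ => (p (r * exp (θ * I))).re)
      MeasureTheory.volume a b := fun a b => (continuous_re.comp hcont).intervalIntegrable a b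
  have htot : ∫ θ in (0 : ℝ)..2 * π, (p (r * exp (θ * I))).re = 2 * π * (p 0).re := by
    have hmean : circleAverage p 0 r = p 0 := by
      refine DiffContOnCl.circleAverage (hp.diffContOnCl_ball ?_)
      rw [abs_of_pos hr0]
      exact closedBall_subset_ball hr1
    rw [circleAverage_def, inv_smul_eq_iff₀ (by positivity)] at hmean
    have := congrArg re hmean
    rw [smul_re, smul_eq_mul] at this
    rw [← this]
    simpa [circleMap] using
      reCLM.intervalIntegral_comp_comm (hcont.intervalIntegrable 0 (2 * π))
  have hlow : ∀ a b : ℝ, a ≤ b → c * (b - a) ≤ ∫ θ in a..b, (p (r * exp (θ * I))).re :=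
    fun a b hab => by
      have := intervalIntegral.integral_mono_on hab (intervalIntegrable_const (c := c))
        (hint a b) fun θ _ => hc _ (hmem θ)
      simpa [mul_comm] using this
  have hA := intervalIntegral.integral_add_adjacent_intervals (hint 0 θ₁) (hint θ₁ θ₂)
  have hB := intervalIntegral.integral_add_adjacent_intervals (hint 0 θ₂) (hint θ₂ (2 * π))
  have := hlow _ _ h1
  have := hlow _ _ h2
  linarith

theorem eq_mul_dslope_zero {f : ℂ → ℂ} (hf0 : f 0 = 0) (z : ℂ) : f z = z * dslope f 0 z := by
  simpa [hf0] using (sub_smul_dslope f 0 z).symm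

theorem differentiableOn_dslope_zero {f : ℂ → ℂ} (hf : DifferentiableOn ℂ f (ball 0 1)) :
    DifferentiableOn ℂ (dslope f 0) (ball 0 1) :=
  (differentiableOn_dslope (ball_mem_nhds 0 one_pos)).2 hf

theorem deriv_eq_dslope_add {f : ℂ → ℂ} (hf : DifferentiableOn ℂ f (ball 0 1)) (hf0 : f 0 = 0)
    {z : ℂ} (hz : z ∈ ball (0 : ℂ) 1) :
    deriv f z = dslope f 0 z + z * deriv (dslope f 0) z := by
  have hu := ((differentiableOn_dslope_zero hf).differentiableAt
    (isOpen_ball.mem_nhds hz)).hasDerivAt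
  have h := (hasDerivAt_id z).mul hu
  rw [show id * dslope f 0 = f from funext fun z => (eq_mul_dslope_zero hf0 z).symm] at h
  simpa using h.deriv

/-- **Marx–Strohhäcker theorem**: a normalized convex function is starlike of order `1/2`. -/
theorem Kclass.half_lt_re_deriv_div_dslope {f : ℂ → ℂ} (hf : Kclass f) :
    ∀ z ∈ ball (0 : ℂ) 1, dslope f 0 z ≠ 0 ∧ 1 / 2 < (deriv f z / dslope f 0 z).re := by
  obtain ⟨⟨hd, hf0, hf1, hne⟩, hre⟩ := hf
  have hu := differentiableOn_dslope_zero hd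
  have hf' := hd.deriv isOpen_ball
  set w : ℂ → ℂ := fun z => 1 - dslope f 0 z / deriv f z with hw
  have hlt : ∀ z ∈ ball (0 : ℂ) 1, ‖w z‖ < 1 := by
    refine norm_lt_one_of_mul_one_sub_eq (a := 1) (b := 1)
      (Q := fun z => z * deriv (deriv f) z / deriv f z)
      ((hu.div hf' hne).const_sub 1) (by simp [hw, hf1]) one_pos zero_le_one (fun z hz => ?_)
      fun z hz => ?_
    · have hnhds := isOpen_ball.mem_nhds hz
      have hz' := hne z hz
      have h := (((hu.differentiableAt hnhds).hasDerivAt.div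
        (hf'.differentiableAt hnhds).hasDerivAt hz').const_sub 1).deriv
      have hdw : deriv w z = _ := h
      have heq := deriv_eq_dslope_add hd hf0 hz
      rw [hdw]
      simp only [hw, ofReal_one]
      field_simp
      linear_combination -(deriv f z) * heq
    · have := hre z hz
      rw [add_re, one_re] at this
      linarith
  intro z hz
  have hz' := hne z hz
  have h1 : 1 - w z = dslope f 0 z / deriv f z := by simp [hw]
  have hu0 : dslope f 0 z ≠ 0 := fun h0 => by
    have := hlt z hz
    simp [hw, h0] at this
  refine ⟨hu0, ?_⟩
  have := half_lt_re_inv_one_sub (hlt z hz)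
  rwa [h1, inv_div] at this

theorem Kclass.dslope_mem_slitPlane {f : ℂ → ℂ} (hf : Kclass f) :
    ∀ z ∈ ball (0 : ℂ) 1, dslope f 0 z ∈ slitPlane := by
  have hstar := hf.half_lt_re_deriv_div_dslope
  obtain ⟨⟨hd, hf0, hf1, hne⟩, hre⟩ := hf
  have hu := differentiableOn_dslope_zero hd
  set w : ℂ → ℂ := fun z => 1 - (dslope f 0 z)⁻¹ with hw
  have hlt : ∀ z ∈ ball (0 : ℂ) 1, ‖w z‖ < 1 := by
    refine norm_lt_one_of_mul_one_sub_eq (a := 1) (b := 0)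
      (Q := fun z => deriv f z / dslope f 0 z - 1)
      ((hu.inv fun z hz => (hstar z hz).1).const_sub 1) (by simp [hw, hf1]) one_pos le_rfl
      (fun z hz => ?_) fun z hz => ?_
    · have hz' := (hstar z hz).1
      have h := ((hu.differentiableAt (isOpen_ball.mem_nhds hz)).hasDerivAt.inv hz').const_sub 1
        |>.deriv
      have hdw : deriv w z = _ := h
      rw [hdw, deriv_eq_dslope_add hd hf0 hz]
      simp only [hw, ofReal_one, ofReal_zero]
      field_simp
      ring
    · have := (hstar z hz).2
      rw [sub_re, one_re]
      linarith
  intro z hz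
  have := half_lt_re_inv_one_sub (hlt z hz)
  rw [show 1 - w z = (dslope f 0 z)⁻¹ by simp [hw], inv_inv] at this
  exact Or.inl (by linarith)

theorem Kclass.deriv_mem_slitPlane {g : ℂ → ℂ} (hg : Kclass g) :
    ∀ z ∈ ball (0 : ℂ) 1, deriv g z ∈ slitPlane := by
  obtain ⟨⟨hd, -, hg1, hne⟩, hre⟩ := hg
  have hg' := hd.deriv isOpen_ball
  obtain ⟨L, hL0, hL⟩ := ((hg'.deriv isOpen_ball).div hg' hne).isExactOn_ball.with_val_at 0 0
  have hLd : DifferentiableOn ℂ L (ball 0 1) := fun z hz =>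
    (hL z hz).differentiableAt.differentiableWithinAt
  have hexp : ∀ z ∈ ball (0 : ℂ) 1, deriv g z = exp (L z) := by
    obtain ⟨c, -, hc⟩ := (logDeriv_eqOn_iff hg' hLd.cexp isOpen_ball
      (convex_ball (0 : ℂ) 1).isPreconnected (fun z _ => Complex.exp_ne_zero _) hne).1 fun z hz => by
        rw [logDeriv_apply, logDeriv_apply, (hL z hz).cexp.deriv]
        simp [Complex.exp_ne_zero]
    have h0 := hc (mem_ball_self one_pos)
    simp only [hg1, Pi.smul_apply, hL0, Complex.exp_zero, smul_eq_mul, mul_one] at h0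
    intro z hz
    simpa [← h0] using hc hz
  set w : ℂ → ℂ := fun z => 1 - exp (-L z / 2) with hw
  have hlt : ∀ z ∈ ball (0 : ℂ) 1, ‖w z‖ < 1 := by
    refine norm_lt_one_of_mul_one_sub_eq (a := 2) (b := 0)
      (Q := fun z => z * deriv (deriv g) z / deriv g z)
      ((hLd.neg.div_const 2).cexp.const_sub 1) (by simp [hw, hL0]) two_pos le_rfl
      (fun z hz => ?_) fun z hz => ?_
    · have hdw : deriv w z = _ := (((hL z hz).neg.div_const 2).cexp.const_sub 1).deriv
      rw [hdw]
      simp only [hw, ofReal_zero, ofReal_ofNat, Pi.div_apply, Pi.neg_apply]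
      ring
    · have := hre z hz
      rw [add_re, one_re] at this
      linarith
  intro z hz
  have hpos : 0 < (exp (-L z / 2))⁻¹.re := by
    have := half_lt_re_inv_one_sub (hlt z hz)
    rw [show 1 - w z = exp (-L z / 2) by simp [hw]] at this
    linarith
  rw [hexp z hz, show exp (L z) = (exp (-L z / 2))⁻¹ * (exp (-L z / 2))⁻¹ by
    rw [← Complex.exp_neg, ← Complex.exp_add]; ring_nf, mem_slitPlane_iff, mul_re, mul_im]
  by_cases him : (exp (-L z / 2))⁻¹.im = 0
  · left
    rw [him]
    nlinarith
  · right
    have := mul_ne_zero hpos.ne' him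
    contrapose! this
    linarith

theorem hasDerivAt_of_eq_integral {h C : ℂ → ℂ} (hh : DifferentiableOn ℂ h (ball 0 1))
    (hC : ∀ z ∈ ball (0 : ℂ) 1, C z = ∫ t in (0 : ℝ)..1, h (t * z) * z)
    {z : ℂ} (hz : z ∈ ball (0 : ℂ) 1) : HasDerivAt C (h z) z := by
  obtain ⟨H, hH0, hH⟩ := hh.isExactOn_ball.with_val_at 0 0
  refine (hH z hz).congr_of_eventuallyEq ?_
  filter_upwards [isOpen_ball.mem_nhds hz] with ζ hζ
  have hmem : ∀ t ∈ Set.uIcc (0 : ℝ) 1, (t : ℂ) * ζ ∈ ball (0 : ℂ) 1 := fun t ht => by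
    rw [Set.uIcc_of_le zero_le_one] at ht
    rw [mem_ball_zero_iff] at hζ ⊢
    rw [norm_mul, norm_real, norm_of_nonneg ht.1]
    exact (mul_le_of_le_one_left (norm_nonneg ζ) ht.2).trans_lt hζ
  have hderiv : ∀ t ∈ Set.uIcc (0 : ℝ) 1,
      HasDerivAt (fun t : ℝ => H (t * ζ)) (h (t * ζ) * ζ) t := fun t ht => by
    have := (hH _ (hmem t ht)).comp (t : ℂ) ((hasDerivAt_id (t : ℂ)).mul_const ζ)
    simpa using this.comp_ofReal
  have hcont : ContinuousOn (fun t : ℝ => h (t * ζ) * ζ) (Set.uIcc 0 1) :=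
    (hh.continuousOn.comp (by fun_prop) hmem).mul continuousOn_const
  rw [hC ζ hζ, intervalIntegral.integral_eq_sub_of_hasDerivAt hderiv hcont.intervalIntegrable]
  simp [hH0]

theorem hasDerivAt_cpow_mul_cpow {u G : ℂ → ℂ} {u' G' z : ℂ} (a b : ℂ) (hu : HasDerivAt u u' z)
    (hG : HasDerivAt G G' z) (huz : u z ∈ slitPlane) (hGz : G z ∈ slitPlane) :
    HasDerivAt (fun z => u z ^ a * G z ^ b)
      (u z ^ a * G z ^ b * (a * (u' / u z) + b * (G' / G z))) z := by
  refine ((hu.cpow_const (c := a) huz).mul (hG.cpow_const (c := b) hGz)).congr_deriv ?_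
  rw [cpow_sub _ _ (slitPlane_ne_zero huz), cpow_sub _ _ (slitPlane_ne_zero hGz), cpow_one,
    cpow_one]
  ring

/-- for convex `f, g`, `α < 0`, `β < 0` with `α + 2β ≥ -1`, the Kaplan
integral of `C_{α,β}[f,g]` exceeds `(α + 2β)π ≥ -π`, hence close-to-convexity. -/
theorem stmt_14 (f g : ℂ → ℂ) (hf : Kclass f) (hg : Kclass g)
    (α β : ℝ) (hα : α < 0) (hβ : β < 0) (hsum : -1 ≤ α + 2 * β)
    (C : ℂ → ℂ)
    (hC : ∀ z ∈ ball (0:ℂ) 1,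
      C z = ∫ t in (0:ℝ)..1,
        (f ((t : ℂ) * z) / ((t : ℂ) * z)) ^ (α : ℂ)
          * (deriv g ((t : ℂ) * z)) ^ (β : ℂ) * z)
    (r : ℝ) (hr0 : 0 < r) (hr1 : r < 1)
    (θ₁ θ₂ : ℝ) (h1 : 0 ≤ θ₁) (h12 : θ₁ < θ₂) (h2 : θ₂ ≤ 2 * π) :
    ((α + 2 * β) * π <
        ∫ θ in θ₁..θ₂,
          (1 + ((r : ℂ) * Complex.exp (θ * Complex.I))
              * deriv (deriv C) ((r : ℂ) * Complex.exp (θ * Complex.I))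
              / deriv C ((r : ℂ) * Complex.exp (θ * Complex.I))).re)
    ∧
    (-π ≤ (α + 2 * β) * π) := by
  refine ⟨?_, by nlinarith [pi_pos]⟩
  obtain ⟨⟨hfd, hf0, -, -⟩, -⟩ := id hf
  obtain ⟨⟨hgd, -, -, hgne⟩, hgre⟩ := id hg
  have hu := differentiableOn_dslope_zero hfd
  have hstar := hf.half_lt_re_deriv_div_dslope
  have hG := hgd.deriv isOpen_ball
  set P : ℂ → ℂ := fun z => deriv f z / dslope f 0 z with hP
  set q : ℂ → ℂ := fun z => 1 + z * deriv (deriv g) z / deriv g z with hq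
  have hPd : DifferentiableOn ℂ P (ball 0 1) :=
    (hfd.deriv isOpen_ball).div hu fun z hz => (hstar z hz).1
  have hqd : DifferentiableOn ℂ q (ball 0 1) :=
    ((differentiableOn_id.mul (hG.deriv isOpen_ball)).div hG hgne).const_add 1
  set h : ℂ → ℂ := fun z => dslope f 0 z ^ (α : ℂ) * deriv g z ^ (β : ℂ) with hh
  have hhderiv : ∀ z ∈ ball (0 : ℂ) 1, HasDerivAt h _ z := fun z hz =>
    hasDerivAt_cpow_mul_cpow α β (hu.differentiableAt (isOpen_ball.mem_nhds hz)).hasDerivAt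
      (hG.differentiableAt (isOpen_ball.mem_nhds hz)).hasDerivAt
      (hf.dslope_mem_slitPlane z hz) (hg.deriv_mem_slitPlane z hz)
  have hCderiv : ∀ z ∈ ball (0 : ℂ) 1, HasDerivAt C (h z) z := fun z hz => by
    refine hasDerivAt_of_eq_integral
      (fun z hz => (hhderiv z hz).differentiableAt.differentiableWithinAt) (fun ζ hζ => ?_) hz
    rw [hC ζ hζ]
    refine intervalIntegral.integral_congr_uIoo fun t ht => ?_
    rw [Set.uIoo_of_le zero_le_one] at ht
    rcases eq_or_ne ζ 0 with rfl | hζ0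
    · simp
    · have : (t : ℂ) * ζ ≠ 0 := mul_ne_zero (ofReal_ne_zero.2 ht.1.ne') hζ0
      simp only [hh]
      nth_rewrite 1 [eq_mul_dslope_zero hf0]
      rw [mul_div_cancel_left₀ _ this]
  have hkey : ∀ z ∈ ball (0 : ℂ) 1, (1 + z * deriv (deriv C) z / deriv C z).re =
      (1 - α - β) + α * (P z).re + β * (q z).re := fun z hz => by
    have hev : deriv C =ᶠ[nhds z] h := by
      filter_upwards [isOpen_ball.mem_nhds hz] with ζ hζ using (hCderiv ζ hζ).deriv
    have hu0 := (hstar z hz).1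
    have hg0 := hgne z hz
    have hne : h z ≠ 0 := mul_ne_zero (by simp [cpow_eq_zero_iff, hu0])
      (by simp [cpow_eq_zero_iff, hg0])
    have heq : 1 + z * deriv (deriv C) z / deriv C z =
        ((1 - α - β : ℝ) : ℂ) + α * P z + β * q z := by
      rw [hev.deriv_eq, hev.eq_of_nhds, (hhderiv z hz).deriv]
      change 1 + z * (h z * _) / h z = _
      simp only [hP, hq]
      rw [deriv_eq_dslope_add hfd hf0 hz]
      push_cast
      field_simp
      ring
    rw [heq]
    simp
  have hmem : ∀ θ : ℝ, (r : ℂ) * exp (θ * I) ∈ ball (0 : ℂ) 1 := fun θ => by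
    simp [abs_of_pos hr0, hr1, norm_exp_ofReal_mul_I]
  have hint : ∀ p : ℂ → ℂ, DifferentiableOn ℂ p (ball 0 1) → IntervalIntegrable
      (fun θ : ℝ => (p (r * exp (θ * I))).re) MeasureTheory.volume θ₁ θ₂ := fun p hp =>
    (continuous_re.comp
      (hp.continuousOn.comp_continuous (by fun_prop) hmem)).intervalIntegrable _ _
  simp_rw [fun θ : ℝ => hkey _ (hmem θ)]
  rw [intervalIntegral.integral_add (intervalIntegrable_const.add ((hint P hPd).const_mul α))
      ((hint q hqd).const_mul β),
    intervalIntegral.integral_add intervalIntegrable_const ((hint P hPd).const_mul α),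
    intervalIntegral.integral_const_mul, intervalIntegral.integral_const_mul,
    intervalIntegral.integral_const, smul_eq_mul]
  have hP0 : P 0 = 1 := by simp [hP, hf.1.2.2.1]
  have hq0 : q 0 = 1 := by simp [hq]
  have hPint := intervalIntegral_re_le hPd (fun z hz => (hstar z hz).2.le) hr0 hr1 h1 h2
  have hqint := intervalIntegral_re_le hqd (fun z hz => (hgre z hz).le) hr0 hr1 h1 h2
  rw [hP0, one_re] at hPint
  rw [hq0, one_re] at hqint
  have hA := mul_le_mul_of_nonpos_left hPint hα.le
  have hB := mul_le_mul_of_nonpos_left hqint hβ.le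
  nlinarith [mul_pos (sub_pos.2 h12) (neg_pos.2 hα), mul_pos (sub_pos.2 h12) (neg_pos.2 hβ)]
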